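/- (Third formal-group-law formula, Theorem "fglFormulas" of the paper, relation for v̄₃.) Under the stated hypotheses, v₃ ≡ r₁·(r₃² + r₃s₃ + s₃²) modulo (2, v₁, v₂); that is, v₃ − r₁·(r₃² + r₃s₃ + s₃²) lies in the ideal (2, v₁, v₂) of S. -/

import Mathlib

/-!
Applying `γ` to `mᵢ - γ mᵢ = Aᵢ` and using `γ² mᵢ = -mᵢ` gives `mᵢ + γ mᵢ = γ Aᵢ`, hence
`2 mᵢ = Aᵢ + γ Aᵢ`.  This determines `m₁, m₂, m₃` in turn as polynomials in the generators with
denominators powers of `2`, and the 2-series relations then determine `v₁, v₂, v₃`.  In particular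
`v₁ = -(r₁ + s₁)`, so `s₁` can be eliminated in favour of `r₁` and `v₁`.  Since `S` embeds in
`S[1/2]` (`iota_injective`), the resulting formulas hold in `S`.  Modulo `(2, v₁)` one finds
`v₂ ≡ r₁³ + r₃ + s₃` and `v₃ ≡ r₁ r₃² + r₁⁴ r₃ + r₁⁷`, so that
`v₃ - r₁ (r₃² + r₃ s₃ + s₃²) ≡ (r₁ s₃ + r₁⁴) v₂`; the proof gives the cofactors of `2`, `v₁`
and `v₂` explicitly.
-/

noncomputable section

open MvPolynomial

instance : (Ideal.span {(2 : ℤ)}).IsPrime :=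
  (Ideal.span_singleton_prime (by norm_num)).mpr Int.prime_two

/-- `ℤ₍₂₎`, the localization of `ℤ` at the prime ideal `(2)`. -/
abbrev Zloc : Type := Localization.AtPrime (Ideal.span {(2 : ℤ)})

/-- `S = ℤ₍₂₎[r₁, s₁, r₃, s₃]`, the polynomial ring in four variables over `ℤ₍₂₎`. -/
abbrev S : Type := MvPolynomial (Fin 4) Zloc

/-- The generator `r₁`. -/
def r1 : S := X 0
/-- The generator `s₁` (playing the role of `γr̄₁`). -/
def s1 : S := X 1
/-- The generator `r₃`. -/
def r3 : S := X 2
/-- The generator `s₃` (playing the role of `γr̄₃`). -/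
def s3 : S := X 3

/-- `S[1/2]`, the localization of `S` away from `2`. -/
abbrev S2 : Type := Localization.Away (2 : S)

/-- The canonical map `S → S[1/2]`. -/
def ι : S →+* S2 := algebraMap S S2

lemma two_ne_zero_S : (2 : S) ≠ 0 := by
  have hinj : Function.Injective (algebraMap ℤ Zloc) :=
    IsLocalization.injective Zloc (Ideal.primeCompl_le_nonZeroDivisors (Ideal.span {(2 : ℤ)}))
  have h2 : (2 : Zloc) ≠ 0 := by
    intro h
    have : algebraMap ℤ Zloc 2 = algebraMap ℤ Zloc 0 := by simpa using h
    exact absurd (hinj this) (by norm_num)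
  intro h
  apply h2
  apply MvPolynomial.C_injective (Fin 4) Zloc
  rw [map_zero, ← h]
  exact map_ofNat C 2

lemma iota_injective : Function.Injective ι :=
  IsLocalization.injective S2
    (powers_le_nonZeroDivisors_of_noZeroDivisors two_ne_zero_S)

lemma isUnit_two_S2 : IsUnit (2 : S2) := by
  have h := IsLocalization.Away.algebraMap_isUnit (S := S2) (2 : S)
  rwa [map_ofNat] at h

/-- **Theorem (fglFormulas, third relation).**  `v₃ ≡ r₁·(r₃² + r₃s₃ + s₃²) (mod (2, v₁, v₂))`. -/
theorem v3_formula
    (γ : S2 ≃+* S2)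
    (hγr1 : γ (ι r1) = ι s1) (hγs1 : γ (ι s1) = -ι r1)
    (hγr3 : γ (ι r3) = ι s3) (hγs3 : γ (ι s3) = -ι r3)
    (m1 m2 m3 m4 : S2)
    (hγ2m1 : γ (γ m1) = -m1) (hγ2m2 : γ (γ m2) = -m2)
    (hγ2m3 : γ (γ m3) = -m3) (hγ2m4 : γ (γ m4) = -m4)
    (hlog1 : m1 - γ m1 = ι r1)
    (hlog2 : m2 - γ m2 = γ m1 * ι r1 ^ 2 + ι r3)
    (hlog3 : m3 - γ m3 = γ m2 * ι r1 ^ 4 + γ m1 * ι r3 ^ 2)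
    (hlog4 : m4 - γ m4 = γ m3 * ι r1 ^ 8 + γ m2 * ι r3 ^ 4)
    (v1 v2 v3 v4 : S)
    (h2s1 : 2 * m1 = 4 * m1 + ι v1)
    (h2s2 : 2 * m2 = 16 * m2 + m1 * ι v1 ^ 2 + ι v2)
    (h2s3 : 2 * m3 = 2 ^ 8 * m3 + m2 * ι v1 ^ 4 + m1 * ι v2 ^ 2 + ι v3)
    (h2s4 : 2 * m4 = 2 ^ 16 * m4 + m3 * ι v1 ^ 8 + m2 * ι v2 ^ 4 + m1 * ι v3 ^ 2 + ι v4)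
    : v3 - r1 * (r3 ^ 2 + r3 * s3 + s3 ^ 2) ∈ Ideal.span ({2, v1, v2} : Set S) := by
  have e1 : γ (γ m1) = γ m1 - ι s1 := by
    have h := congrArg γ hlog1
    simp only [map_sub, hγr1] at h
    linear_combination -h
  have e2 : γ (γ m2) = γ m2 - (γ (γ m1) * ι s1 ^ 2 + ι s3) := by
    have h := congrArg γ hlog2
    simp only [map_sub, map_add, map_mul, map_pow, hγr1, hγr3] at h
    linear_combination -h
  have e3 : γ (γ m3) = γ m3 - (γ (γ m2) * ι s1 ^ 4 + γ (γ m1) * ι s3 ^ 2) := by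
    have h := congrArg γ hlog3
    simp only [map_sub, map_add, map_mul, map_pow, hγr1, hγr3] at h
    linear_combination -h
  rw [hγ2m1] at e1 e2 e3
  rw [hγ2m2] at e2 e3
  rw [hγ2m3] at e3
  have hs1 : ι s1 = -ι r1 - ι v1 := by
    linear_combination -h2s1 - hlog1 + e1
  rw [hs1] at e1 e2 e3
  -- The logarithm coefficients, with denominators cleared and `s₁ = -r₁ - v₁` substituted.
  have M1 : 2 * m1 = -ι v1 := by linear_combination -h2s1
  have G1 : γ m1 = m1 - ι r1 := by linear_combination -hlog1
  rw [G1] at hlog2 hlog3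
  have M2 : 4 * m2 =
      -2 * ι r1 ^ 3 + 2 * ι r1 * ι v1 ^ 2 + ι v1 ^ 3 + 2 * ι r3 + 2 * ι s3 := by
    linear_combination 2 * hlog2 - 2 * e2 + (ι r1 ^ 2 - (-ι r1 - ι v1) ^ 2) * M1
  have G2 : γ m2 = m2 - ((m1 - ι r1) * ι r1 ^ 2 + ι r3) := by linear_combination -hlog2
  rw [G2] at hlog3
  have M3 : 2 * m3 = (m2 - ((m1 - ι r1) * ι r1 ^ 2 + ι r3)) * ι r1 ^ 4
      + (m1 - ι r1) * ι r3 ^ 2 - m2 * (-ι r1 - ι v1) ^ 4 - m1 * ι s3 ^ 2 := by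
    linear_combination hlog3 - e3
  have V2 : v2 = -7 * s3 - 7 * r3 - 3 * v1 ^ 3 - 7 * r1 * v1 ^ 2 + 7 * r1 ^ 3 := by
    apply iota_injective
    apply (isUnit_two_S2.pow 2).mul_left_cancel
    simp only [map_add, map_sub, map_mul, map_pow, map_neg, map_ofNat]
    linear_combination -4 * h2s2 - 14 * M2 - 2 * ι v1 ^ 2 * M1
  have V3 : v3 =
        -39 * v1 * s3 ^ 2 + 49 * v1 * r3 * s3 + 88 * v1 * r3 ^ 2 + 84 * v1 ^ 4 * s3 +
        84 * v1 ^ 4 * r3 + 36 * v1 ^ 7 + 127 * r1 * r3 ^ 2 + 303 * r1 * v1 ^ 3 * s3 +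
        303 * r1 * v1 ^ 3 * r3 + 211 * r1 * v1 ^ 6 + 381 * r1 ^ 2 * v1 ^ 2 * s3 +
        381 * r1 ^ 2 * v1 ^ 2 * r3 + 469 * r1 ^ 2 * v1 ^ 5 + 205 * r1 ^ 3 * v1 * s3 +
        205 * r1 ^ 3 * v1 * r3 + 424 * r1 ^ 3 * v1 ^ 4 + 127 * r1 ^ 4 * r3 -
        49 * r1 ^ 4 * v1 ^ 3 - 381 * r1 ^ 5 * v1 ^ 2 - 293 * r1 ^ 6 * v1 - 127 * r1 ^ 7 := by
    apply iota_injective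
    apply (isUnit_two_S2.pow 3).mul_left_cancel
    have hv2 := congrArg ι V2
    simp only [map_add, map_sub, map_mul, map_pow, map_neg, map_ofNat] at hv2 ⊢
    rw [hv2] at h2s3
    -- Eliminate `m₃`, then `m₂`, then `m₁`.
    linear_combination -8 * h2s3 - 8 * 127 * M3
      + (-2 * ι v1 ^ 4 - 254 * (ι r1 ^ 4 - (-ι r1 - ι v1) ^ 4)) * M2
      + (-4 * (-7 * ι s3 - 7 * ι r3 - 3 * ι v1 ^ 3 - 7 * ι r1 * ι v1 ^ 2 + 7 * ι r1 ^ 3) ^ 2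
        - 508 * (-ι r1 ^ 6 + ι r3 ^ 2 - ι s3 ^ 2)) * M1
  have key : v3 - r1 * (r3 ^ 2 + r3 * s3 + s3 ^ 2) =
      (3 * r1 * s3 ^ 2 + 3 * r1 * r3 * s3 + 63 * r1 * r3 ^ 2 + 67 * r1 ^ 4 * r3 -
        67 * r1 ^ 7) * 2
      + (-39 * s3 ^ 2 + 49 * r3 * s3 + 88 * r3 ^ 2 + 84 * v1 ^ 3 * s3 + 84 * v1 ^ 3 * r3
        + 36 * v1 ^ 6 + 306 * r1 * v1 ^ 2 * s3 + 303 * r1 * v1 ^ 2 * r3 +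
        211 * r1 * v1 ^ 5 + 388 * r1 ^ 2 * v1 * s3 + 381 * r1 ^ 2 * v1 * r3 +
        469 * r1 ^ 2 * v1 ^ 4 + 205 * r1 ^ 3 * s3 + 205 * r1 ^ 3 * r3 +
        424 * r1 ^ 3 * v1 ^ 3 - 46 * r1 ^ 4 * v1 ^ 2 - 374 * r1 ^ 5 * v1 - 293 * r1 ^ 6) * v1
      + (r1 * s3 + r1 ^ 4) * v2 := by
    rw [V3, V2]
    ring
  rw [key]
  have hmem : ∀ x ∈ ({2, v1, v2} : Set S), x ∈ Ideal.span ({2, v1, v2} : Set S) :=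
    fun x hx => Ideal.subset_span hx
  exact add_mem (add_mem (Ideal.mul_mem_left _ _ (hmem _ (by simp)))
    (Ideal.mul_mem_left _ _ (hmem _ (by simp)))) (Ideal.mul_mem_left _ _ (hmem _ (by simp)))
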